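/- Assume 0 < τ, σ_min ≤ τ < (σ_min + σ_min,m+1)/2, and let r ∈ ℝ^{M+N} satisfy Π_m r = r. Set j₀ = min{1, M−N}. Then for every j ≥ j₀ there exists w ∈ K_j(B_m, r) such that ‖B_m w + r‖ ≤ 2 · (σ_max/τ)^{j₀} · (1 − 2/(1 + √((σ_max² − τ²)/(σ_min,m+1² − τ²))))^{⌊(j−j₀)/2⌋} · ‖r‖, where ⌊·⌋ denotes the integer part. -/

import Mathlib

open Matrix

noncomputable def vnorm {ι : Type*} [Fintype ι] (x : ι → ℝ) : ℝ :=
  Real.sqrt (∑ i, x i ^ 2)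

noncomputable def Krylov {ι : Type*} [Fintype ι] [DecidableEq ι]
    (B : Matrix ι ι ℝ) (r : ι → ℝ) (j : ℕ) : Submodule ℝ (ι → ℝ) :=
  Submodule.span ℝ {x | ∃ i < j, x = (B ^ i) *ᵥ r}

/-! On vectors fixed by the deflating projection the deflated matrix acts as `K - τ`, where `K` is
the augmented matrix `[[0, A], [Aᵀ, 0]]`. A MINRES residual is therefore `p(K) r` for a polynomial
`p` with `p(τ) = 1`, and its norm is at most `‖r‖` times the maximum of `|p|` over the eigenvalues
of `K` present in `r`: these are the numbers `±σᵢ` of the triplets that were not deflated,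
together with `0` if `A` has more rows than columns. Choose `p(x) = (x / τ) ^ ℓ * g(x²)` with `g`
the Chebyshev polynomial of the interval spanned by the `σᵢ²`, normalised at `τ²`; for `ℓ = 1` the
first factor removes the eigenvalue `0`.
-/

open Polynomial

section Chebyshev

/-- The convergence factor `(√κ - 1) / (√κ + 1)` of Chebyshev polynomials normalised to be `1` at a
point `t` outside an interval, where `κ` is the ratio of the distances from `t` to the two end
points of the interval. -/
noncomputable def chebyshevRate (κ : ℝ) : ℝ :=
  1 - 2 / (1 + √κ)

lemma chebyshevRate_one : chebyshevRate 1 = 0 := by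
  norm_num [chebyshevRate]

lemma chebyshevRate_nonneg {κ : ℝ} (hκ : 1 ≤ κ) : 0 ≤ chebyshevRate κ := by
  have hsqrt : 1 ≤ √κ := Real.one_le_sqrt.2 hκ
  rw [chebyshevRate, sub_nonneg, div_le_one (by positivity)]
  linarith

lemma chebyshevRate_pos {κ : ℝ} (hκ : 1 < κ) : 0 < chebyshevRate κ := by
  have hsqrt : 1 < √κ := Real.lt_sqrt_of_sq_lt (by simpa using hκ)
  rw [chebyshevRate, sub_pos, div_lt_one (by positivity)]
  linarith

lemma chebyshevRate_add_inv {κ : ℝ} (hκ : 1 < κ) :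
    (chebyshevRate κ + (chebyshevRate κ)⁻¹) / 2 = (κ + 1) / (κ - 1) := by
  have hsqrt : 1 < √κ := Real.lt_sqrt_of_sq_lt (by simpa using hκ)
  have hsq : κ = √κ ^ 2 := (Real.sq_sqrt (by linarith)).symm
  have hrate : chebyshevRate κ = (√κ - 1) / (√κ + 1) := by
    rw [chebyshevRate]
    field_simp
    ring
  have hsub : √κ - 1 ≠ 0 := by linarith
  have hκsub : √κ ^ 2 - 1 ≠ 0 := by nlinarith
  rw [hrate, inv_div]
  generalize √κ = q at *
  rw [hsq]
  field_simp
  ring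

lemma inv_eval_chebyshev_T_le {ρ : ℝ} (hρ : 0 < ρ) (k : ℕ) :
    ((Chebyshev.T ℝ k).eval ((ρ + ρ⁻¹) / 2))⁻¹ ≤ 2 * ρ ^ k := by
  have hT : (Chebyshev.T ℝ k).eval ((ρ + ρ⁻¹) / 2) = (ρ ^ k + (ρ ^ k)⁻¹) / 2 := by
    rw [← Real.cosh_log hρ, Chebyshev.T_real_cosh, Int.cast_natCast, ← Real.log_pow,
      Real.cosh_log (pow_pos hρ k)]
  rw [hT, inv_le_iff_one_le_mul₀ (by positivity)]
  have hcancel : ρ ^ k * (ρ ^ k)⁻¹ = 1 := mul_inv_cancel₀ (by positivity)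
  nlinarith [sq_nonneg (ρ ^ k)]

lemma exists_polynomial_abs_eval_le_chebyshevRate_of_lt {a b t : ℝ} (hta : t < a) (hab : a < b)
    (k : ℕ) :
    ∃ g : ℝ[X], g.natDegree ≤ k ∧ g.eval t = 1 ∧
      ∀ x ∈ Set.Icc a b, |g.eval x| ≤ 2 * chebyshevRate ((b - t) / (a - t)) ^ k := by
  have hat : 0 < a - t := sub_pos.2 hta
  have hba : 0 < b - a := sub_pos.2 hab
  have hκ : 1 < (b - t) / (a - t) := by rw [one_lt_div hat]; linarith
  set ρ := chebyshevRate ((b - t) / (a - t))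
  set L : ℝ[X] := C (b - a)⁻¹ * (C (b + a) - 2 * X) with hL
  have hL_eval (x : ℝ) : L.eval x = (b + a - 2 * x) / (b - a) := by simp [hL]; ring
  have hLt : L.eval t = (ρ + ρ⁻¹) / 2 := by
    have hne : (b - t) / (a - t) - 1 ≠ 0 := (sub_pos.2 hκ).ne'
    rw [hL_eval, chebyshevRate_add_inv hκ, div_eq_div_iff hba.ne' hne]
    field_simp
    ring
  have hL_le : ∀ x ∈ Set.Icc a b, |L.eval x| ≤ 1 := by
    rintro x ⟨hax, hxb⟩
    rw [hL_eval, abs_le, le_div_iff₀ hba, div_le_iff₀ hba]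
    constructor <;> linarith
  have hT_pos : 0 < (Chebyshev.T ℝ k).eval (L.eval t) := by
    refine one_pos.trans_le (Chebyshev.one_le_eval_T_real k ?_)
    rw [hL_eval, one_le_div hba]
    linarith
  refine ⟨C ((Chebyshev.T ℝ k).eval (L.eval t))⁻¹ * (Chebyshev.T ℝ k).comp L, ?_, ?_, ?_⟩
  · have hL_deg : L.natDegree ≤ 1 := by rw [hL]; compute_degree
    calc _ ≤ ((Chebyshev.T ℝ k).comp L).natDegree := natDegree_C_mul_le _ _
      _ ≤ (Chebyshev.T ℝ k).natDegree * L.natDegree := natDegree_comp_le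
      _ ≤ k := by simpa using Nat.mul_le_mul_left k hL_deg
  · simp [eval_comp, hT_pos.ne']
  · intro x hx
    rw [eval_mul, eval_C, eval_comp, abs_mul, abs_of_pos (inv_pos.2 hT_pos)]
    calc _ ≤ ((Chebyshev.T ℝ k).eval (L.eval t))⁻¹ * 1 := by
          gcongr; exact Chebyshev.abs_eval_T_real_le_one k (hL_le x hx)
      _ ≤ 2 * ρ ^ k := by
          rw [mul_one, hLt]; exact inv_eval_chebyshev_T_le (chebyshevRate_pos hκ) k

lemma exists_polynomial_abs_eval_le_chebyshevRate {a b t : ℝ} (hta : t < a) (hab : a ≤ b) (k : ℕ) :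
    ∃ g : ℝ[X], g.natDegree ≤ k ∧ g.eval t = 1 ∧
      ∀ x ∈ Set.Icc a b, |g.eval x| ≤ 2 * chebyshevRate ((b - t) / (a - t)) ^ k := by
  obtain hlt | rfl := hab.lt_or_eq
  · exact exists_polynomial_abs_eval_le_chebyshevRate_of_lt hta hlt k
  have hat : a - t ≠ 0 := (sub_pos.2 hta).ne'
  refine ⟨(C (a - t)⁻¹ * (C a - X)) ^ k, ?_, by simp [hat], fun x hx => ?_⟩
  · have hdeg : (C (a - t)⁻¹ * (C a - X)).natDegree ≤ 1 := by compute_degree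
    exact (natDegree_pow_le_of_le k hdeg).trans_eq (mul_one k)
  · obtain rfl : x = a := le_antisymm hx.2 hx.1
    rw [div_self hat, chebyshevRate_one]
    obtain rfl | hk := eq_or_ne k 0 <;> simp [*]

lemma exists_residual_polynomial {τ α β : ℝ} (hτ : 0 < τ) (hτα : τ < α) (hαβ : α ≤ β) (ℓ k : ℕ) :
    ∃ p : ℝ[X], p.natDegree ≤ ℓ + 2 * k ∧ p.eval τ = 1 ∧
      ∀ x, x ^ 2 ∈ Set.Icc (α ^ 2) (β ^ 2) ∨ ℓ ≠ 0 ∧ x = 0 → |p.eval x| ≤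
        2 * (β / τ) ^ ℓ * chebyshevRate ((β ^ 2 - τ ^ 2) / (α ^ 2 - τ ^ 2)) ^ k := by
  have hβ : 0 ≤ β := by linarith
  have hτα_sq : τ ^ 2 < α ^ 2 := by gcongr
  have hαβ_sq : α ^ 2 ≤ β ^ 2 := by gcongr; linarith
  obtain ⟨g, hg_deg, hg_one, hg_le⟩ := exists_polynomial_abs_eval_le_chebyshevRate hτα_sq hαβ_sq k
  have hrate : 0 ≤ chebyshevRate ((β ^ 2 - τ ^ 2) / (α ^ 2 - τ ^ 2)) := by
    refine chebyshevRate_nonneg ?_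
    rw [one_le_div (by linarith)]
    linarith
  refine ⟨(C τ⁻¹ * X) ^ ℓ * g.comp (X ^ 2), ?_, by simp [hτ.ne', hg_one], ?_⟩
  · refine natDegree_mul_le_of_le ?_ ?_
    · have hdeg : (C τ⁻¹ * X).natDegree ≤ 1 := by compute_degree
      exact (natDegree_pow_le_of_le ℓ hdeg).trans_eq (mul_one ℓ)
    · rw [natDegree_comp, natDegree_X_pow, mul_comm]
      gcongr
  · rintro x (hx | ⟨hℓ, rfl⟩)
    · have hx_le : |x| ≤ β := abs_le_of_sq_le_sq hx.2 hβ
      calc |((C τ⁻¹ * X) ^ ℓ * g.comp (X ^ 2)).eval x|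
          = (|x| / τ) ^ ℓ * |g.eval (x ^ 2)| := by
            simp [eval_comp, abs_mul, abs_of_pos hτ, div_eq_inv_mul]
        _ ≤ (β / τ) ^ ℓ * (2 * _) := by gcongr; exact hg_le _ hx
        _ = _ := by ring
    · rw [eval_mul, eval_pow]
      simp only [eval_mul, eval_X, mul_zero, zero_pow hℓ, zero_mul, abs_zero]
      positivity

end Chebyshev

section Krylov

variable {n : Type*} [Fintype n] [DecidableEq n]

lemma exists_mem_krylov_mulVec_add_eq_aeval_mulVec (B : Matrix n n ℝ) (r : n → ℝ) {j : ℕ}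
    {p : ℝ[X]} (hdeg : p.natDegree ≤ j) (hp : p.eval 0 = 1) :
    ∃ w ∈ Krylov B r j, B *ᵥ w + r = aeval B p *ᵥ r := by
  refine ⟨∑ i ∈ Finset.range j, p.coeff (i + 1) • (B ^ i *ᵥ r), ?_, ?_⟩
  · exact Submodule.sum_mem _ fun i hi => Submodule.smul_mem _ _
      (Submodule.subset_span ⟨i, Finset.mem_range.1 hi, rfl⟩)
  · rw [← coeff_zero_eq_eval_zero] at hp
    rw [aeval_eq_sum_range' (Nat.lt_succ_of_le hdeg), Finset.sum_range_succ', add_mulVec, hp,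
      mulVec_sum, sum_mulVec]
    simp [mulVec_smul, smul_mulVec, pow_succ']

lemma pow_mul_mul_mulVec_of_commute {R : Type*} [Semiring R] {P B : Matrix n n R}
    (hPB : Commute P B) {r : n → R} (hr : P *ᵥ r = r) (i : ℕ) :
    (P * B * P) ^ i *ᵥ r = B ^ i *ᵥ r := by
  have hfix (i : ℕ) : P *ᵥ (B ^ i *ᵥ r) = B ^ i *ᵥ r := by
    rw [mulVec_mulVec, (hPB.pow_right i).eq, ← mulVec_mulVec, hr]
  induction i with
  | zero => simp
  | succ i ih =>
    rw [pow_succ', ← mulVec_mulVec, ih, ← mulVec_mulVec, hfix, ← mulVec_mulVec, mulVec_mulVec _ B,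
      ← pow_succ', hfix]

lemma aeval_mul_mul_mulVec_of_commute {R : Type*} [CommSemiring R] {P B : Matrix n n R}
    (hPB : Commute P B) {r : n → R} (hr : P *ᵥ r = r) (p : R[X]) :
    aeval (P * B * P) p *ᵥ r = aeval B p *ᵥ r := by
  simp only [aeval_eq_sum_range, sum_mulVec, smul_mulVec, pow_mul_mul_mulVec_of_commute hPB hr]

lemma exists_mem_krylov_deflated_shift {P K : Matrix n n ℝ} (hPK : Commute P K) {r : n → ℝ}
    (hr : P *ᵥ r = r) (τ : ℝ) {j : ℕ} {p : ℝ[X]} (hdeg : p.natDegree ≤ j) (hp : p.eval τ = 1) :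
    ∃ w ∈ Krylov (P * (K - τ • 1) * P) r j,
      (P * (K - τ • 1) * P) *ᵥ w + r = aeval K p *ᵥ r := by
  have hdeg' : (p.comp (X + C τ)).natDegree ≤ j := by simpa [natDegree_comp] using hdeg
  obtain ⟨w, hw, hres⟩ := exists_mem_krylov_mulVec_add_eq_aeval_mulVec (P * (K - τ • 1) * P) r
    hdeg' (by simpa [eval_comp] using hp)
  have hPshift : Commute P (K - τ • 1) := hPK.sub_right ((Commute.one_right P).smul_right τ)
  refine ⟨w, hw, ?_⟩
  rw [hres, aeval_mul_mul_mulVec_of_commute hPshift hr, aeval_comp]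
  simp [Algebra.algebraMap_eq_smul_one]

end Krylov

section Spectral

lemma vnorm_eq_norm_toLp {n : Type*} [Fintype n] (x : n → ℝ) :
    vnorm x = ‖WithLp.toLp 2 x‖ := by
  simp [vnorm, EuclideanSpace.norm_eq]

variable {n : Type*} [Fintype n] [DecidableEq n]

lemma vecMul_aeval_of_vecMul_eq_smul {R : Type*} [CommSemiring R] {K : Matrix n n R} {v : n → R}
    {μ : R} (hv : v ᵥ* K = μ • v) (p : R[X]) : v ᵥ* aeval K p = p.eval μ • v := by
  induction p using Polynomial.induction_on with
  | C a => simp [Algebra.algebraMap_eq_smul_one, vecMul_smul]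
  | add p q hp hq => rw [map_add, vecMul_add, hp, hq, eval_add, add_smul]
  | monomial i a ih =>
    rw [pow_succ, ← mul_assoc, map_mul, ← vecMul_vecMul, ih, aeval_X, smul_vecMul, hv, smul_smul,
      eval_mul_X]

lemma vnorm_aeval_mulVec_le {K : Matrix n n ℝ} (hK : K.IsHermitian) {r : n → ℝ} {p : ℝ[X]} {D : ℝ}
    (hD : 0 ≤ D) (hp : ∀ v μ, K *ᵥ v = μ • v → v ⬝ᵥ r ≠ 0 → |p.eval μ| ≤ D) :
    vnorm (aeval K p *ᵥ r) ≤ D * vnorm r := by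
  set b := hK.eigenvectorBasis
  have hb (i : n) : K *ᵥ b i = hK.eigenvalues i • b i := hK.mulVec_eigenvectorBasis i
  have hinner (i : n) (x : n → ℝ) : inner ℝ (b i) (WithLp.toLp 2 x) = b i ⬝ᵥ x := by
    simp [PiLp.inner_apply, dotProduct, mul_comm]
  have hcoord (i : n) : b i ⬝ᵥ (aeval K p *ᵥ r) = p.eval (hK.eigenvalues i) * (b i ⬝ᵥ r) := by
    have hleft : b i ᵥ* K = hK.eigenvalues i • b i := by
      rw [← mulVec_transpose, ← conjTranspose_eq_transpose_of_trivial, hK.eq, hb]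
    rw [dotProduct_mulVec, vecMul_aeval_of_vecMul_eq_smul hleft, smul_dotProduct, smul_eq_mul]
  have hcoord_le (i : n) : ‖b i ⬝ᵥ (aeval K p *ᵥ r)‖ ^ 2 ≤ D ^ 2 * ‖b i ⬝ᵥ r‖ ^ 2 := by
    rw [hcoord, norm_mul, ← mul_pow]
    obtain hzero | hne := eq_or_ne (b i ⬝ᵥ r) 0
    · simp [hzero]
    · gcongr
      exact hp _ _ (hb i) hne
  rw [vnorm_eq_norm_toLp, vnorm_eq_norm_toLp]
  refine le_of_sq_le_sq ?_ (by positivity)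
  rw [mul_pow, ← b.sum_sq_norm_inner_right, ← b.sum_sq_norm_inner_right, Finset.mul_sum]
  simpa only [hinner] using Finset.sum_le_sum fun i _ => hcoord_le i

lemma orthogonal_conj_mul_orthogonal_conj {R m : Type*} [Semiring R] [Fintype m]
    {W : Matrix m n R} (hW : Wᵀ * W = 1) (X Y : Matrix n n R) :
    W * X * Wᵀ * (W * Y * Wᵀ) = W * (X * Y) * Wᵀ := by
  rw [Matrix.mul_assoc (W * X), ← Matrix.mul_assoc Wᵀ, ← Matrix.mul_assoc Wᵀ, hW, Matrix.one_mul,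
    ← Matrix.mul_assoc, Matrix.mul_assoc W]

lemma mul_diagonal_mul_transpose_coord {R m : Type*} [CommSemiring R] [Fintype m]
    {W : Matrix m n R} (hW : Wᵀ * W = 1) {d : n → R} {v : m → R} {c : R}
    (hv : (W * diagonal d * Wᵀ) *ᵥ v = c • v) (i : n) : d i * (Wᵀ *ᵥ v) i = c * (Wᵀ *ᵥ v) i := by
  have hWv : Wᵀ *ᵥ ((W * diagonal d * Wᵀ) *ᵥ v) = diagonal d *ᵥ (Wᵀ *ᵥ v) := by
    simp only [mulVec_mulVec, ← Matrix.mul_assoc, hW, Matrix.one_mul]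
  rw [← mulVec_diagonal, ← hWv, hv, mulVec_smul, Pi.smul_apply, smul_eq_mul]

lemma exists_eq_sq_of_mulVec_eq_smul {K W : Matrix n n ℝ} {d e : n → ℝ} (hW : Wᵀ * W = 1)
    (hKK : K * K = W * diagonal d * Wᵀ) {r : n → ℝ} (hr : (W * diagonal e * Wᵀ) *ᵥ r = r)
    {v : n → ℝ} {μ : ℝ} (hv : K *ᵥ v = μ • v) (hvr : v ⬝ᵥ r ≠ 0) :
    ∃ i, e i ≠ 0 ∧ d i = μ ^ 2 := by
  have hvr' : (Wᵀ *ᵥ v) ⬝ᵥ (Wᵀ *ᵥ r) ≠ 0 := by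
    rwa [dotProduct_mulVec, vecMul_transpose, mulVec_mulVec, mul_eq_one_comm.1 hW, one_mulVec]
  obtain ⟨i, -, hi⟩ := Finset.exists_ne_zero_of_sum_ne_zero hvr'
  have hKKv : (W * diagonal d * Wᵀ) *ᵥ v = μ ^ 2 • v := by
    rw [← hKK, ← mulVec_mulVec, hv, mulVec_smul, hv, smul_smul, sq]
  refine ⟨i, fun hei => right_ne_zero_of_mul hi ?_, ?_⟩
  · simpa [hei] using (mul_diagonal_mul_transpose_coord hW (hr.trans (one_smul ℝ r).symm) i).symm
  · exact mul_right_cancel₀ (left_ne_zero_of_mul hi) (mul_diagonal_mul_transpose_coord hW hKKv i)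

end Spectral

theorem exists_mem_krylov_vnorm_deflated_shift_le {n : Type*} [Fintype n] [DecidableEq n]
    {K W P : Matrix n n ℝ} {d e : n → ℝ} {τ α β : ℝ} {ℓ j : ℕ}
    (hK : K.IsHermitian) (hW : Wᵀ * W = 1) (hKK : K * K = W * diagonal d * Wᵀ)
    (hP : P = W * diagonal e * Wᵀ) (hPK : Commute P K)
    (hτ : 0 < τ) (hτα : τ < α) (hαβ : α ≤ β)
    (hd : ∀ i, e i ≠ 0 → d i ∈ Set.Icc (α ^ 2) (β ^ 2) ∨ ℓ ≠ 0 ∧ d i = 0)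
    {r : n → ℝ} (hr : P *ᵥ r = r) (hj : ℓ ≤ j) :
    ∃ w ∈ Krylov (P * (K - τ • 1) * P) r j,
      vnorm ((P * (K - τ • 1) * P) *ᵥ w + r) ≤
        2 * (β / τ) ^ ℓ * chebyshevRate ((β ^ 2 - τ ^ 2) / (α ^ 2 - τ ^ 2)) ^ ((j - ℓ) / 2) *
          vnorm r := by
  obtain ⟨p, hdeg, hp_one, hp_le⟩ := exists_residual_polynomial hτ hτα hαβ ℓ ((j - ℓ) / 2)
  obtain ⟨w, hw, hres⟩ :=
    exists_mem_krylov_deflated_shift hPK hr τ (hdeg.trans (by omega : _ ≤ j)) hp_one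
  refine ⟨w, hw, hres ▸ vnorm_aeval_mulVec_le hK ?_ fun v μ hv hvr => hp_le μ ?_⟩
  · exact (abs_nonneg _).trans (hp_le α (.inl ⟨le_rfl, by gcongr; linarith⟩))
  · obtain ⟨i, hei, hdi⟩ := exists_eq_sq_of_mulVec_eq_smul hW hKK (hP ▸ hr) hv hvr
    simpa [hdi] using hd i hei

section SingularValues

variable {R κ ι : Type*}

/-- The augmented (Jordan–Wielandt) matrix `[[0, A], [Aᵀ, 0]]`, whose eigenvalues are `±` the
singular values of `A`, and zeros. -/
def augmented [Zero R] (A : Matrix κ ι R) : Matrix (κ ⊕ ι) (κ ⊕ ι) R :=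
  fromBlocks 0 A Aᵀ 0

lemma augmented_isHermitian (A : Matrix κ ι ℝ) : (augmented A).IsHermitian := by
  rw [Matrix.IsHermitian, conjTranspose_eq_transpose_of_trivial, augmented, fromBlocks_transpose,
    transpose_transpose, transpose_zero, transpose_zero]

lemma fromBlocks_neg_smul_one_eq_augmented_sub [CommRing R] [DecidableEq κ]
    [DecidableEq ι] (A : Matrix κ ι R) (τ : R) :
    fromBlocks ((-τ) • 1) A Aᵀ ((-τ) • 1) = augmented A - τ • 1 := by
  simp [augmented, ← fromBlocks_one, fromBlocks_smul, sub_eq_add_neg, fromBlocks_neg,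
    fromBlocks_add]

lemma augmented_mul_mul_transpose [CommSemiring R] [Fintype κ] [Fintype ι]
    (U : Matrix κ κ R) (S : Matrix κ ι R) (V : Matrix ι ι R) :
    augmented (U * S * Vᵀ) = fromBlocks U 0 0 V * augmented S * (fromBlocks U 0 0 V)ᵀ := by
  simp [augmented, fromBlocks_transpose, fromBlocks_multiply, Matrix.mul_assoc]

/-- The rectangular diagonal factor `Σ` of a singular value decomposition, the value `σ j` standing
in row `f j` of column `j`. -/
def rectDiagonal [Zero R] [DecidableEq κ] (f : ι → κ) (σ : ι → R) : Matrix κ ι R :=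
  of fun i j => if i = f j then σ j else 0

lemma transpose_mul_rectDiagonal [Semiring R] [DecidableEq κ] [DecidableEq ι] [Fintype κ]
    {f : ι → κ} (hf : f.Injective) (σ : ι → R) :
    (rectDiagonal f σ)ᵀ * rectDiagonal f σ = diagonal (σ ^ 2) := by
  ext i j
  obtain rfl | hij := eq_or_ne i j
  · simp [rectDiagonal, mul_apply, sq]
  · simp [rectDiagonal, mul_apply, hij, hij.symm, hf.eq_iff]

lemma rectDiagonal_mul_transpose [Semiring R] [DecidableEq κ] [Fintype ι] {f : ι → κ}
    (hf : f.Injective) (σ : ι → R) :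
    rectDiagonal f σ * (rectDiagonal f σ)ᵀ = diagonal (Function.extend f (σ ^ 2) 0) := by
  ext i k
  rw [mul_apply]
  by_cases hi : ∃ j, f j = i
  · obtain ⟨j, rfl⟩ := hi
    rw [Finset.sum_eq_single j (fun l _ hl => by simp [rectDiagonal, hf.eq_iff, hl.symm]) (by simp)]
    obtain rfl | hk := eq_or_ne (f j) k
    · simp [rectDiagonal, hf.extend_apply, sq]
    · simp [rectDiagonal, hk, hk.symm]
  · have hne (j : ι) : i ≠ f j := fun h => hi ⟨j, h.symm⟩
    simp [rectDiagonal, diagonal_apply, hne, Function.extend_apply' _ _ _ hi]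

lemma diagonal_mul_rectDiagonal [CommSemiring R] [DecidableEq κ] [DecidableEq ι] [Fintype κ]
    [Fintype ι] (e : κ → R) (f : ι → κ) (σ : ι → R) :
    diagonal e * rectDiagonal f σ = rectDiagonal f σ * diagonal (e ∘ f) := by
  ext i j
  by_cases hij : i = f j <;> simp [rectDiagonal, hij, mul_comm]

lemma sq_mem_Icc_or_eq_zero_of_not_deflated {μ : Type*} {f : ι → κ} {g : μ → ι} (hf : f.Injective)
    {σ : ι → ℝ} {α β : ℝ} (hα : 0 ≤ α) (hσ : ∀ i ∉ Set.range g, σ i ∈ Set.Icc α β)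
    {ℓ : ℕ} (hℓ : ℓ = 0 → f.Surjective) (i : κ ⊕ ι)
    (hi : Sum.elim ((Set.range (f ∘ g))ᶜ.indicator (1 : κ → ℝ))
      ((Set.range (f ∘ g))ᶜ.indicator (1 : κ → ℝ) ∘ f) i ≠ 0) :
    Sum.elim (Function.extend f (σ ^ 2) (0 : κ → ℝ)) (σ ^ 2) i ∈ Set.Icc (α ^ 2) (β ^ 2) ∨
      ℓ ≠ 0 ∧ Sum.elim (Function.extend f (σ ^ 2) (0 : κ → ℝ)) (σ ^ 2) i = 0 := by
  have hσ_sq (j : ι) (hj : (Set.range (f ∘ g))ᶜ.indicator (1 : κ → ℝ) (f j) ≠ 0) :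
      σ j ^ 2 ∈ Set.Icc (α ^ 2) (β ^ 2) := by
    have hmem := hσ j fun ⟨l, hl⟩ => Set.mem_of_indicator_ne_zero hj ⟨l, congrArg f hl⟩
    exact ⟨pow_le_pow_left₀ hα hmem.1 2, pow_le_pow_left₀ (hα.trans hmem.1) hmem.2 2⟩
  obtain i | j := i
  · by_cases hrange : ∃ j, f j = i
    · obtain ⟨j, rfl⟩ := hrange
      exact .inl (by simpa [hf.extend_apply] using hσ_sq j hi)
    · exact .inr ⟨fun h => hrange (hℓ h i), Function.extend_apply' _ _ _ hrange⟩
  · exact .inl (hσ_sq j hi)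

variable [Fintype κ] [Fintype ι] [DecidableEq κ] [DecidableEq ι]

lemma augmented_rectDiagonal_mul_self [Semiring R] {f : ι → κ} (hf : f.Injective) (σ : ι → R) :
    augmented (rectDiagonal f σ) * augmented (rectDiagonal f σ) =
      diagonal (Sum.elim (Function.extend f (σ ^ 2) 0) (σ ^ 2)) := by
  simp [augmented, fromBlocks_multiply, rectDiagonal_mul_transpose hf,
    transpose_mul_rectDiagonal hf]

lemma commute_diagonal_augmented_rectDiagonal [CommSemiring R] (e : κ → R) (f : ι → κ)
    (σ : ι → R) :
    Commute (diagonal (Sum.elim e (e ∘ f))) (augmented (rectDiagonal f σ)) := by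
  have htranspose : diagonal (e ∘ f) * (rectDiagonal f σ)ᵀ = (rectDiagonal f σ)ᵀ * diagonal e := by
    simpa using (congrArg transpose (diagonal_mul_rectDiagonal e f σ)).symm
  rw [commute_iff_eq, ← fromBlocks_diagonal, augmented, fromBlocks_multiply, fromBlocks_multiply,
    diagonal_mul_rectDiagonal, htranspose]
  simp

lemma one_sub_submatrix_mul_transpose [CommRing R] {μ : Type*} [Fintype μ] {U : Matrix κ κ R}
    (hU : Uᵀ * U = 1) {g : μ → κ} (hg : g.Injective) :
    1 - U.submatrix id g * (U.submatrix id g)ᵀ =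
      U * diagonal ((Set.range g)ᶜ.indicator 1) * Uᵀ := by
  set G : Matrix κ μ R := rectDiagonal g 1 with hG
  have hsub : U.submatrix id g = U * G := by
    ext i j
    simp [hG, rectDiagonal, mul_apply]
  have hdiag : diagonal ((Set.range g)ᶜ.indicator 1) = 1 - G * Gᵀ := by
    rw [hG, rectDiagonal_mul_transpose hg, ← diagonal_one, diagonal_sub]
    congr 1
    ext i
    by_cases hi : ∃ j, g j = i
    · obtain ⟨j, rfl⟩ := hi
      simp [hg.extend_apply]
    · simp [Set.indicator, hi]
  rw [hdiag, hsub, transpose_mul, mul_sub, sub_mul, mul_one, mul_eq_one_comm.1 hU]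
  simp only [Matrix.mul_assoc]

lemma fromBlocks_one_sub_submatrix_mul_transpose [CommRing R] {μ : Type*} [Fintype μ]
    {f : ι → κ} {g : μ → ι} (hf : f.Injective) (hg : g.Injective)
    {U : Matrix κ κ R} {V : Matrix ι ι R} (hU : Uᵀ * U = 1) (hV : Vᵀ * V = 1) :
    fromBlocks (1 - U.submatrix id (f ∘ g) * (U.submatrix id (f ∘ g))ᵀ) 0 0
        (1 - V.submatrix id g * (V.submatrix id g)ᵀ) =
      fromBlocks U 0 0 V *
        diagonal (Sum.elim ((Set.range (f ∘ g))ᶜ.indicator 1)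
          ((Set.range (f ∘ g))ᶜ.indicator 1 ∘ f)) *
        (fromBlocks U 0 0 V)ᵀ := by
  have hcomp : (Set.range (f ∘ g))ᶜ.indicator (1 : κ → R) ∘ f = (Set.range g)ᶜ.indicator 1 := by
    ext i
    simp [Set.indicator, hf.eq_iff]
  rw [one_sub_submatrix_mul_transpose hU (hf.comp hg), one_sub_submatrix_mul_transpose hV hg,
    hcomp, ← fromBlocks_diagonal]
  simp [-fromBlocks_diagonal, fromBlocks_transpose, fromBlocks_multiply]

end SingularValues

theorem minres_bound_precond_exact_smallest_general {κ ι μ : Type*} [Fintype κ] [Fintype ι]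
    [Fintype μ] [DecidableEq κ] [DecidableEq ι] {f : ι → κ} {g : μ → ι}
    (hf : f.Injective) (hg : g.Injective)
    {U : Matrix κ κ ℝ} {V : Matrix ι ι ℝ} (hU : Uᵀ * U = 1) (hV : Vᵀ * V = 1)
    {σ : ι → ℝ} {A : Matrix κ ι ℝ} (hA : A = U * rectDiagonal f σ * Vᵀ)
    {τ α β : ℝ} (hτ : 0 < τ) (hτα : τ < α) (hαβ : α ≤ β)
    (hσ : ∀ i ∉ Set.range g, σ i ∈ Set.Icc α β)
    {Um : Matrix κ μ ℝ} (hUm : Um = U.submatrix id (f ∘ g))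
    {Vm : Matrix ι μ ℝ} (hVm : Vm = V.submatrix id g)
    {P Bm : Matrix (κ ⊕ ι) (κ ⊕ ι) ℝ}
    (hP : P = fromBlocks (1 - Um * Umᵀ) 0 0 (1 - Vm * Vmᵀ))
    (hBm : Bm = P * fromBlocks ((-τ) • 1) A Aᵀ ((-τ) • 1) * P)
    {r : κ ⊕ ι → ℝ} (hr : P *ᵥ r = r)
    {ℓ j : ℕ} (hℓ : ℓ = 0 → f.Surjective) (hj : ℓ ≤ j) :
    ∃ w ∈ Krylov Bm r j,
      vnorm (Bm *ᵥ w + r) ≤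
        2 * (β / τ) ^ ℓ *
          (1 - 2 / (1 + √((β ^ 2 - τ ^ 2) / (α ^ 2 - τ ^ 2)))) ^ ((j - ℓ) / 2) * vnorm r := by
  set W := fromBlocks U 0 0 V
  have hW : Wᵀ * W = 1 := by simp [W, fromBlocks_transpose, fromBlocks_multiply, hU, hV]
  have hK : augmented A = W * augmented (rectDiagonal f σ) * Wᵀ :=
    hA ▸ augmented_mul_mul_transpose U _ V
  have hKK : augmented A * augmented A =
      W * diagonal (Sum.elim (Function.extend f (σ ^ 2) 0) (σ ^ 2)) * Wᵀ := by
    rw [hK, orthogonal_conj_mul_orthogonal_conj hW, augmented_rectDiagonal_mul_self hf]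
  rw [hUm, hVm, fromBlocks_one_sub_submatrix_mul_transpose hf hg hU hV] at hP
  have hPK : Commute P (augmented A) := by
    rw [commute_iff_eq, hP, hK, orthogonal_conj_mul_orthogonal_conj hW,
      orthogonal_conj_mul_orthogonal_conj hW, commute_diagonal_augmented_rectDiagonal]
  rw [hBm, fromBlocks_neg_smul_one_eq_augmented_sub]
  exact exists_mem_krylov_vnorm_deflated_shift_le (augmented_isHermitian A) hW hKK hP hPK hτ hτα hαβ
    (sq_mem_Icc_or_eq_zero_of_not_deflated hf (hτ.trans hτα).le hσ hℓ) hr hj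

/-- Theorem 4.2(ii). MINRES bound for the preconditioned JDSVD correction
equation with exact singular subspaces, in the case `σ_min ≤ τ < (σ_min + σ_min,m+1)/2`. -/
theorem minres_bound_precond_exact_smallest {M N m : ℕ} (hN : 2 ≤ N) (hMN : N ≤ M)
    (hm : 1 ≤ m) (hmN : m < N)
    (A : Matrix (Fin M) (Fin N) ℝ)
    (U : Matrix (Fin M) (Fin M) ℝ) (V : Matrix (Fin N) (Fin N) ℝ)
    (hU : Uᵀ * U = 1) (hV : Vᵀ * V = 1)
    (σ : Fin N → ℝ) (hσ : ∀ i, 0 ≤ σ i)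
    (S : Matrix (Fin M) (Fin N) ℝ)
    (hS : ∀ i j, S i j = if (i : ℕ) = (j : ℕ) then σ j else 0)
    (hA : A = U * S * Vᵀ)
    (τ : ℝ) (hτ0 : 0 < τ)
    (hclosest : ∀ i j : Fin N, (i : ℕ) < m → m ≤ (j : ℕ) → |σ i - τ| ≤ |σ j - τ|)
    (σmax σmin σminm1 : ℝ)
    (hσmax : IsGreatest (Set.range σ) σmax)
    (hσmin : IsLeast (Set.range σ) σmin)
    (hσminm1 : IsLeast (σ '' {i : Fin N | m ≤ (i : ℕ)}) σminm1)
    (hτ1 : σmin ≤ τ) (hτ2 : τ < (σmin + σminm1) / 2)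
    (Um : Matrix (Fin M) (Fin m) ℝ)
    (hUm : ∀ i j, Um i j = U i ⟨(j : ℕ), by have := j.isLt; omega⟩)
    (Vm : Matrix (Fin N) (Fin m) ℝ)
    (hVm : ∀ i j, Vm i j = V i ⟨(j : ℕ), by have := j.isLt; omega⟩)
    (B P Bm : Matrix (Fin M ⊕ Fin N) (Fin M ⊕ Fin N) ℝ)
    (hB : B = Matrix.fromBlocks ((-τ) • 1) A Aᵀ ((-τ) • 1))
    (hP : P = Matrix.fromBlocks (1 - Um * Umᵀ) 0 0 (1 - Vm * Vmᵀ))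
    (hBm : Bm = P * B * P)
    (r : Fin M ⊕ Fin N → ℝ) (hr : P *ᵥ r = r) :
    ∀ j : ℕ, min 1 (M - N) ≤ j → ∃ w ∈ Krylov Bm r j,
      vnorm (Bm *ᵥ w + r) ≤
        2 * (σmax / τ) ^ (min 1 (M - N)) *
          (1 - 2 / (1 + Real.sqrt ((σmax ^ 2 - τ ^ 2) / (σminm1 ^ 2 - τ ^ 2)))) ^
            ((j - min 1 (M - N)) / 2) * vnorm r := by
  intro j hj
  have hS' : S = rectDiagonal (Fin.castLE hMN) σ := by
    ext i j
    simp [rectDiagonal, hS, Fin.ext_iff]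
  have hsurj (h : min 1 (M - N) = 0) : (Fin.castLE hMN).Surjective := by
    obtain rfl : M = N := by omega
    exact Function.surjective_id
  exact minres_bound_precond_exact_smallest_general (Fin.castLE_injective hMN)
    (Fin.castLE_injective hmN.le) hU hV (hS' ▸ hA) hτ0 (by linarith)
    (hσmax.2 (Set.image_subset_range _ _ hσminm1.1))
    (fun i hi => ⟨hσminm1.2 ⟨i, by simpa [Fin.range_castLE] using hi, rfl⟩, hσmax.2 ⟨i, rfl⟩⟩)
    (Matrix.ext hUm) (Matrix.ext hVm) hP (hB ▸ hBm) hr hsurj hj
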